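/- Let a = (1 4)(2 6)(3 7)(5 8) and b = (1 2 3 4 5 6 7 8 9) be permutations of a nine-element set (a is the product of the four indicated transpositions; b is the 9-cycle). Then a has order 2, b has order 9, the product a·b has order 3, and the subgroup of the symmetric group generated by {a, b} is a simple group of cardinality 504. -/

import Mathlib

/-!
Let `t` be a root of `X ^ 3 + X + 1` in a field of characteristic two. Labelling the nine points by
`∞, 0, t ^ 6, t ^ 2, t ^ 3, 1, t ^ 4, t ^ 5, t` turns `b` into `x ↦ 1 / (x + t)` and `a` into
`x ↦ (t ^ 2 * x + t ^ 2) / (x + t ^ 2)`, so a member of the group `G` generated by `a` and `b` is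
determined by its values at the points labelled `∞`, `0` and `1`. On the other hand `b`, `b a b⁻¹`
and the seven-cycle `b ^ 4 a b` show that `G` is triply transitive, whence `|G| = 9 * 8 * 7`.

A nontrivial normal subgroup of the primitive group `G` is transitive, so its index divides
`504 / 9 = 56`. It therefore contains `a b` and `b`, whose orders `3` and `9` are prime to `56`,
and these two elements generate `G`.
-/

open Matrix MulAction OnePoint SubMulAction
open scoped MatrixGroups

section GroupAction

variable {G α : Type*} [Group G] [MulAction G α]

theorem isPretransitive_of_isPretransitive_stabilizer {y : α} (hy : ∃ g : G, g • y ≠ y)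
    [IsPretransitive (stabilizer G y) (ofStabilizer G y)] : IsPretransitive G α := by
  obtain ⟨d, hd⟩ := hy
  refine (isPretransitive_iff_base y).2 fun w => ?_
  obtain rfl | hw := eq_or_ne w y
  · exact ⟨1, one_smul G w⟩
  · obtain ⟨c, hc⟩ := exists_smul_eq (stabilizer G y)
      (⟨d • y, hd⟩ : ofStabilizer G y) (⟨w, hw⟩ : ofStabilizer G y)
    exact ⟨c * d, (mul_smul _ _ _).trans (congrArg Subtype.val hc)⟩

theorem isMultiplyPretransitive_three_of_base [IsPretransitive G α] {x y z : α}
    (hyx : y ≠ x) (hzx : z ≠ x) (hzy : z ≠ y) (hy : ∃ g : G, g • x = x ∧ g • y ≠ y)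
    (hz : ∀ w, w ≠ x → w ≠ y → ∃ g : G, g • x = x ∧ g • y = y ∧ g • z = w) :
    IsMultiplyPretransitive G α 3 := by
  let y' : ofStabilizer G x := ⟨y, hyx⟩
  let z' : ofStabilizer (stabilizer G x) y' :=
    ⟨⟨z, hzx⟩, fun h => hzy (congrArg Subtype.val h)⟩
  have : IsPretransitive (stabilizer (stabilizer G x) y')
      (ofStabilizer (stabilizer G x) y') := by
    refine (isPretransitive_iff_base z').2 fun ⟨⟨w, hwx⟩, hwy⟩ => ?_
    obtain ⟨g, hgx, hgy, hgz⟩ := hz w hwx fun h => hwy (Subtype.ext h)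
    exact ⟨⟨⟨g, hgx⟩, Subtype.ext hgy⟩, Subtype.ext (Subtype.ext hgz)⟩
  have : IsPretransitive (stabilizer G x) (ofStabilizer G x) := by
    obtain ⟨g, hgx, hgy⟩ := hy
    exact isPretransitive_of_isPretransitive_stabilizer (y := y')
      ⟨⟨g, hgx⟩, fun h => hgy (congrArg Subtype.val h)⟩
  rwa [ofStabilizer.isMultiplyPretransitive (a := x),
    ofStabilizer.isMultiplyPretransitive (a := y'), is_one_pretransitive_iff]

theorem card_eq_descFactorial_of_fixingSubgroup_eq_bot [Finite α] {s : Set α}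
    (htrans : IsMultiplyPretransitive G α s.ncard) (hs : fixingSubgroup G s = ⊥) :
    Nat.card G = (Nat.card α).descFactorial s.ncard := by
  rw [← Subgroup.index_bot, ← hs, htrans.index_of_fixingSubgroup_eq,
    Nat.descFactorial_eq_factorial_mul_choose, mul_comm]

theorem card_dvd_card_of_normal_of_ne_bot [IsQuasiPreprimitive G α] [FaithfulSMul G α]
    {N : Subgroup G} [N.Normal] (hN : N ≠ ⊥) : Nat.card α ∣ Nat.card N := by
  have hfix : fixedPoints N α ≠ Set.univ := by
    refine fun h => hN (N.eq_bot_iff_forall.2 fun g hg => ?_)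
    refine FaithfulSMul.eq_of_smul_eq_smul (α := α) fun x => ?_
    rw [one_smul]
    exact (h ▸ Set.mem_univ x : x ∈ fixedPoints N α) ⟨g, hg⟩
  obtain ⟨x, -⟩ := (Set.ne_univ_iff_exists_notMem _).1 hfix
  have := IsQuasiPreprimitive.isPretransitive_of_normal (G := G) hfix
  rw [← index_stabilizer_of_transitive N x]
  exact Subgroup.index_dvd_card _

theorem mem_of_coprime_orderOf_index {N : Subgroup G} [N.Normal] {g : G}
    (h : (orderOf g).Coprime N.index) : g ∈ N := by
  rw [← QuotientGroup.eq_one_iff, ← orderOf_eq_one_iff]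
  exact Nat.eq_one_of_dvd_coprimes h (orderOf_map_dvd (QuotientGroup.mk' N) g)
    (orderOf_dvd_natCard _)

variable (α) in
theorem isSimpleGroup_of_closure_eq_top_of_coprime [Nontrivial G] [FaithfulSMul G α]
    [IsQuasiPreprimitive G α] {S : Set G} (hS : Subgroup.closure S = ⊤)
    (hcop : ∀ s ∈ S, (orderOf s).Coprime (Nat.card G / Nat.card α)) : IsSimpleGroup G where
  eq_bot_or_eq_top_of_normal N _ := by
    refine or_iff_not_imp_left.2 fun hN => ?_
    have hindex : N.index ∣ Nat.card G / Nat.card α := by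
      rw [← N.index_mul_card, Nat.mul_div_assoc _ (card_dvd_card_of_normal_of_ne_bot hN)]
      exact dvd_mul_right _ _
    rw [eq_top_iff, ← hS, Subgroup.closure_le]
    exact fun s hs => mem_of_coprime_orderOf_index ((hcop s hs).coprime_dvd_right hindex)

theorem exists_apply_eq_smul_of_mem_closure {X : Type*} {f : X → α} {S : Set (Equiv.Perm X)}
    (hS : ∀ s ∈ S, ∃ γ : G, ∀ x, f (s x) = γ • f x) {g : Equiv.Perm X}
    (hg : g ∈ Subgroup.closure S) : ∃ γ : G, ∀ x, f (g x) = γ • f x := by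
  induction hg using Subgroup.closure_induction with
  | mem s hs => exact hS s hs
  | one => exact ⟨1, fun x => (one_smul G (f x)).symm⟩
  | mul g h _ _ hg hh =>
    obtain ⟨γ, hγ⟩ := hg
    obtain ⟨δ, hδ⟩ := hh
    exact ⟨γ * δ, fun x => by rw [Equiv.Perm.mul_apply, hγ, hδ, mul_smul]⟩
  | inv g _ hg =>
    obtain ⟨γ, hγ⟩ := hg
    exact ⟨γ⁻¹, fun x => by rw [eq_inv_smul_iff, ← hγ, Equiv.Perm.inv_def, g.apply_symm_apply]⟩

end GroupAction

section ProjectiveLine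

variable {K : Type*} [Field K] [DecidableEq K] {M : GL (Fin 2) K}

theorem smul_infty_eq_coe_iff {y : K} : M • (∞ : OnePoint K) = y ↔ M 0 0 = y * M 1 0 := by
  have hdet := M.det_ne_zero
  rw [det_fin_two] at hdet
  rw [smul_infty_eq_ite]
  split_ifs with h
  · simp only [infty_ne_coe, false_iff]
    grind
  · rw [coe_eq_coe, div_eq_iff h]

theorem smul_coe_eq_infty_iff {x : K} : M • (x : OnePoint K) = ∞ ↔ M 1 0 * x + M 1 1 = 0 := by
  simp [smul_some_eq_ite]

theorem smul_coe_eq_coe_iff {x y : K} :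
    M • (x : OnePoint K) = y ↔ M 0 0 * x + M 0 1 = y * (M 1 0 * x + M 1 1) := by
  have hdet := M.det_ne_zero
  rw [det_fin_two] at hdet
  rw [smul_some_eq_ite]
  split_ifs with h
  · simp only [infty_ne_coe, false_iff]
    grind
  · rw [coe_eq_coe, div_eq_iff h]

theorem smul_eq_self_of_fixes_infty_zero_one (h_infty : M • (∞ : OnePoint K) = ∞)
    (h_zero : M • ((0 : K) : OnePoint K) = (0 : K))
    (h_one : M • ((1 : K) : OnePoint K) = (1 : K)) (p : OnePoint K) : M • p = p := by
  cases p with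
  | infty => exact h_infty
  | coe x =>
    rw [smul_infty_eq_self_iff] at h_infty
    rw [smul_coe_eq_coe_iff] at h_zero h_one ⊢
    grind

end ProjectiveLine

namespace PSLTwoEight

/-- The involution `a`, with the points numbered from `0`. -/
def involPerm : Equiv.Perm (Fin 9) :=
  Equiv.swap 0 3 * Equiv.swap 1 5 * Equiv.swap 2 6 * Equiv.swap 4 7

/-- The group generated by `a` and the nine-cycle `b`. It is a copy of `PSL(2, 8)` acting on the
projective line over the field with eight elements. -/
def grp : Subgroup (Equiv.Perm (Fin 9)) := Subgroup.closure {involPerm, finRotate 9}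

/-- The generator `a`, as a member of the group. -/
def invol : grp := ⟨involPerm, Subgroup.subset_closure (by simp)⟩

/-- The generator `b`, as a member of the group. -/
def rot : grp := ⟨finRotate 9, Subgroup.subset_closure (by simp)⟩

theorem orderOf_involPerm : orderOf involPerm = 2 :=
  orderOf_eq_prime (by decide +kernel) (by decide +kernel)

theorem orderOf_finRotate_nine : orderOf (finRotate 9) = 9 :=
  orderOf_eq_prime_pow (p := 3) (n := 1) (by decide +kernel) (by decide +kernel)

theorem orderOf_involPerm_mul_finRotate : orderOf (involPerm * finRotate 9) = 3 :=
  orderOf_eq_prime (by decide +kernel) (by decide +kernel)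

theorem isPretransitive_grp : IsPretransitive grp (Fin 9) :=
  (isPretransitive_iff_base 0).2 fun x => ⟨rot ^ (x : ℕ), by revert x; decide +kernel⟩

theorem isMultiplyPretransitive_grp : IsMultiplyPretransitive grp (Fin 9) 3 := by
  have := isPretransitive_grp
  have hcycle : ∀ w : Fin 9, w ≠ 0 → w ≠ 1 → ∃ k : Fin 7,
      (rot ^ 4 * invol * rot) ^ (k : ℕ) • (0 : Fin 9) = 0 ∧
      (rot ^ 4 * invol * rot) ^ (k : ℕ) • (1 : Fin 9) = 1 ∧
      (rot ^ 4 * invol * rot) ^ (k : ℕ) • (2 : Fin 9) = w := by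
    decide +kernel
  refine isMultiplyPretransitive_three_of_base (x := (0 : Fin 9)) (y := 1) (z := 2)
    (by decide) (by decide) (by decide) ⟨rot * invol * rot⁻¹, by decide +kernel⟩ ?_
  intro w hw₀ hw₁
  obtain ⟨k, hk⟩ := hcycle w hw₀ hw₁
  exact ⟨_, hk⟩

theorem isMultiplyPretransitive_two_grp : IsMultiplyPretransitive grp (Fin 9) 2 :=
  have := isMultiplyPretransitive_grp
  isMultiplyPretransitive_of_le (n := 3) (by decide) (by simp)

section Label

variable {K : Type*} [Field K]

/-- The labelling of the nine points by the projective line over the field with eight elements,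
obtained from `∞` by iterating `x ↦ 1 / (x + t)`, where `t ^ 3 = t + 1`. -/
def label (t : K) : Fin 9 → OnePoint K :=
  ![∞, (0 : K), (t ^ 6 : K), (t ^ 2 : K), (t ^ 3 : K), (1 : K), (t ^ 4 : K), (t ^ 5 : K), t]

variable [CharP K 2] {t : K}

theorem exists_label_involPerm_eq_smul [DecidableEq K] (ht : t ^ 3 = t + 1) :
    ∃ M : GL (Fin 2) K, ∀ i, label t (involPerm i) = M • label t i := by
  have hdet : !![t ^ 2, t ^ 2; 1, t ^ 2].det ≠ 0 := by rw [det_fin_two_of]; grind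
  obtain ⟨M, h₀₀, h₀₁, h₁₀, h₁₁⟩ : ∃ M : GL (Fin 2) K,
      M 0 0 = t ^ 2 ∧ M 0 1 = t ^ 2 ∧ M 1 0 = 1 ∧ M 1 1 = t ^ 2 :=
    ⟨.mkOfDetNeZero _ hdet, rfl, rfl, rfl, rfl⟩
  refine ⟨M, fun i => Eq.symm ?_⟩
  fin_cases i
  exacts [(smul_infty_eq_coe_iff (y := t ^ 2)).2 (by grind),
    (smul_coe_eq_coe_iff (x := 0) (y := 1)).2 (by grind),
    (smul_coe_eq_coe_iff (x := t ^ 6) (y := t ^ 4)).2 (by grind),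
    (smul_coe_eq_infty_iff (x := t ^ 2)).2 (by grind),
    (smul_coe_eq_coe_iff (x := t ^ 3) (y := t ^ 5)).2 (by grind),
    (smul_coe_eq_coe_iff (x := 1) (y := 0)).2 (by grind),
    (smul_coe_eq_coe_iff (x := t ^ 4) (y := t ^ 6)).2 (by grind),
    (smul_coe_eq_coe_iff (x := t ^ 5) (y := t ^ 3)).2 (by grind),
    (smul_coe_eq_coe_iff (x := t) (y := t)).2 (by grind)]

theorem exists_label_finRotate_eq_smul [DecidableEq K] (ht : t ^ 3 = t + 1) :
    ∃ M : GL (Fin 2) K, ∀ i, label t (finRotate 9 i) = M • label t i := by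
  have hdet : !![0, 1; 1, t].det ≠ 0 := by simp
  obtain ⟨M, h₀₀, h₀₁, h₁₀, h₁₁⟩ : ∃ M : GL (Fin 2) K,
      M 0 0 = 0 ∧ M 0 1 = 1 ∧ M 1 0 = 1 ∧ M 1 1 = t :=
    ⟨.mkOfDetNeZero _ hdet, rfl, rfl, rfl, rfl⟩
  refine ⟨M, fun i => Eq.symm ?_⟩
  fin_cases i
  exacts [(smul_infty_eq_coe_iff (y := 0)).2 (by grind),
    (smul_coe_eq_coe_iff (x := 0) (y := t ^ 6)).2 (by grind),
    (smul_coe_eq_coe_iff (x := t ^ 6) (y := t ^ 2)).2 (by grind),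
    (smul_coe_eq_coe_iff (x := t ^ 2) (y := t ^ 3)).2 (by grind),
    (smul_coe_eq_coe_iff (x := t ^ 3) (y := 1)).2 (by grind),
    (smul_coe_eq_coe_iff (x := 1) (y := t ^ 4)).2 (by grind),
    (smul_coe_eq_coe_iff (x := t ^ 4) (y := t ^ 5)).2 (by grind),
    (smul_coe_eq_coe_iff (x := t ^ 5) (y := t)).2 (by grind),
    (smul_coe_eq_infty_iff (x := t)).2 (by grind)]

theorem exists_label_smul_eq_smul [DecidableEq K] (ht : t ^ 3 = t + 1) (g : grp) :
    ∃ M : GL (Fin 2) K, ∀ i, label t (g • i) = M • label t i := by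
  refine exists_apply_eq_smul_of_mem_closure ?_ g.2
  rintro s (rfl | rfl)
  exacts [exists_label_involPerm_eq_smul ht, exists_label_finRotate_eq_smul ht]

-- Two points with equal labels could be moved to the points `0` and `1`, labelled `∞` and `0`.
theorem label_injective (ht : t ^ 3 = t + 1) : Function.Injective (label t) := by
  classical
  intro i j hij
  by_contra hne
  obtain ⟨g, hi, hj⟩ := is_two_pretransitive_iff.1 isMultiplyPretransitive_two_grp hne
    (zero_ne_one (α := Fin 9))
  obtain ⟨M, hM⟩ := exists_label_smul_eq_smul ht g
  have h : label t 0 = label t 1 := by rw [← hi, ← hj, hM, hM, hij]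
  exact infty_ne_coe _ h

end Label

open Polynomial in
theorem exists_cube_eq_add_one (K : Type*) [Field K] [IsAlgClosed K] [CharP K 2] :
    ∃ t : K, t ^ 3 = t + 1 := by
  have hdeg : (X ^ 3 + X + 1 : K[X]).degree = 3 := by compute_degree!
  obtain ⟨t, ht⟩ := IsAlgClosed.exists_root (X ^ 3 + X + 1 : K[X]) (by rw [hdeg]; decide)
  refine ⟨t, ?_⟩
  simp only [IsRoot.def, eval_add, eval_pow, eval_X, eval_one] at ht
  grind

theorem fixingSubgroup_grp_eq_bot : fixingSubgroup grp ({0, 1, 5} : Set (Fin 9)) = ⊥ := by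
  classical
  obtain ⟨t, ht⟩ := exists_cube_eq_add_one (AlgebraicClosure (ZMod 2))
  refine (Subgroup.eq_bot_iff_forall _).2 fun g hg => ?_
  obtain ⟨M, hM⟩ := exists_label_smul_eq_smul ht g
  have hfix : ∀ i ∈ ({0, 1, 5} : Set (Fin 9)), M • label t i = label t i := fun i hi => by
    rw [← hM, (mem_fixingSubgroup_iff grp).1 hg i hi]
  have hM_smul := smul_eq_self_of_fixes_infty_zero_one
    (hfix 0 (by simp)) (hfix 1 (by simp)) (hfix 5 (by simp))
  refine FaithfulSMul.eq_of_smul_eq_smul (α := Fin 9) fun i => ?_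
  rw [one_smul]
  exact label_injective ht ((hM i).trans (hM_smul _))

theorem card_grp : Nat.card grp = 504 := by
  have hs : ({0, 1, 5} : Set (Fin 9)).ncard = 3 := Set.ncard_eq_toFinset_card' _
  rw [card_eq_descFactorial_of_fixingSubgroup_eq_bot (hs ▸ isMultiplyPretransitive_grp)
    fixingSubgroup_grp_eq_bot, hs, Nat.card_fin]
  rfl

theorem closure_invol_mul_rot_rot : Subgroup.closure {invol * rot, rot} = ⊤ := by
  have hrot : rot ∈ Subgroup.closure {invol * rot, rot} := Subgroup.subset_closure (by simp)
  have hinvol : invol ∈ Subgroup.closure {invol * rot, rot} :=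
    (Subgroup.mul_mem_cancel_right _ hrot).1 (Subgroup.subset_closure (by simp))
  have hgen : Subgroup.closure (((↑) : grp → _) ⁻¹' {involPerm, finRotate 9}) = ⊤ :=
    Subgroup.closure_closure_coe_preimage
  rw [eq_top_iff, ← hgen, Subgroup.closure_le]
  rintro ⟨g, hg⟩ (rfl | rfl)
  exacts [hinvol, hrot]

theorem isSimpleGroup_grp : IsSimpleGroup grp := by
  have : IsPreprimitive grp (Fin 9) :=
    isPreprimitive_of_is_two_pretransitive isMultiplyPretransitive_two_grp
  have : Nontrivial grp := Finite.one_lt_card_iff_nontrivial.1 (by rw [card_grp]; decide)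
  refine isSimpleGroup_of_closure_eq_top_of_coprime (Fin 9) closure_invol_mul_rot_rot ?_
  rw [card_grp, Nat.card_fin]
  rintro s (rfl | rfl)
  · have h : orderOf (invol * rot) = 3 :=
      (Subgroup.orderOf_coe _).symm.trans orderOf_involPerm_mul_finRotate
    rw [h]; decide
  · have h : orderOf rot = 9 := (Subgroup.orderOf_coe _).symm.trans orderOf_finRotate_nine
    rw [h]; decide

end PSLTwoEight

/-- The permutations `a = (1 4)(2 6)(3 7)(5 8)` and `b = (1 2 3 4 5 6 7 8 9)`
of a nine-element set (here realized on `Fin 9`, with labels shifted by one)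
have orders 2 and 9, their product has order 3, and they generate a simple
group of cardinality 504. -/
theorem fox_example_239 :
    let a : Equiv.Perm (Fin 9) :=
      Equiv.swap 0 3 * Equiv.swap 1 5 * Equiv.swap 2 6 * Equiv.swap 4 7
    let b : Equiv.Perm (Fin 9) := finRotate 9
    orderOf a = 2 ∧ orderOf b = 9 ∧ orderOf (a * b) = 3 ∧
      IsSimpleGroup (Subgroup.closure {a, b}) ∧
      Nat.card (Subgroup.closure {a, b}) = 504 :=
  ⟨PSLTwoEight.orderOf_involPerm, PSLTwoEight.orderOf_finRotate_nine,
    PSLTwoEight.orderOf_involPerm_mul_finRotate, PSLTwoEight.isSimpleGroup_grp,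
    PSLTwoEight.card_grp⟩
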